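/- For every fixed integer n ≥ 1, there exists a unique positive integer m_0(n) such that for every integer m ≥ 1: the m-th derivative of Li_{−n} has no zeros in the open unit disk {t ∈ ℂ : |t| < 1} if and only if m ≥ m_0(n). (Equivalently, the polynomial A_{n,m} has no zeros in the open unit disk if and only if m ≥ m_0(n).) -/

import Mathlib

open Polynomial

noncomputable section

/-- The polylogarithm of negative integer order: `Li_{−n}(t) = ∑_{k=1}^∞ k^n t^k`
(the `k = 0` term vanishes for `n ≥ 1`). -/
def fbhLi (n : ℕ) (t : ℂ) : ℂ := ∑' k : ℕ, (k : ℂ) ^ n * t ^ k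

/-!
In the coordinate `s = (1 - t)⁻¹` the unit disk becomes the half-plane `1 / 2 < re s`, the function
`Li_{-n}` becomes a polynomial of positive degree, and `d/dt` becomes `s ^ 2 * d/ds`.
The half-plane avoids `0` and has convex complement, so by the Gauss–Lucas theorem a polynomial
without zeros there is mapped by `s ^ 2 * d/ds` to another one.
Since `(s ^ 2 * d/ds) ^ m` multiplies the coefficient of `s ^ j` by the rising factorial
`j (j + 1) ⋯ (j + m - 1)`, the leading term eventually dominates, all zeros shrink to `0`, and they
leave the half-plane after finitely many steps.
-/

open Filter Finset

section XSqMulDerivative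

/-- The operator `X ^ 2 * d/dX` on polynomials: differentiation with respect to `t` in the
coordinate `X = (1 - t)⁻¹`. -/
def xSqMulDerivative (R : Type*) [CommSemiring R] : R[X] →ₗ[R] R[X] :=
  LinearMap.mulLeft R (X ^ 2) ∘ₗ derivative

section CommSemiring

variable {R : Type*} [CommSemiring R]

theorem xSqMulDerivative_apply (P : R[X]) : xSqMulDerivative R P = X ^ 2 * derivative P :=
  rfl

theorem xSqMulDerivative_monomial (k : ℕ) (a : R) :
    xSqMulDerivative R (monomial k a) = monomial (k + 1) (k * a) := by
  rcases k with _ | k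
  · simp [xSqMulDerivative_apply]
  · rw [xSqMulDerivative_apply, derivative_monomial_succ, X_pow_mul_monomial, mul_comm a]
    push_cast
    rfl

theorem iterate_xSqMulDerivative_monomial (m k : ℕ) (a : R) :
    (xSqMulDerivative R)^[m] (monomial k a) = monomial (k + m) (k.ascFactorial m * a) := by
  induction m with
  | zero => simp
  | succ m ih =>
    rw [Function.iterate_succ_apply', ih, xSqMulDerivative_monomial, Nat.ascFactorial_succ]
    push_cast
    rw [mul_assoc, add_assoc]

theorem eval_iterate_xSqMulDerivative (m : ℕ) (P : R[X]) (s : R) :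
    ((xSqMulDerivative R)^[m] P).eval s =
      s ^ m * ∑ j ∈ range (P.natDegree + 1), j.ascFactorial m * P.coeff j * s ^ j := by
  conv_lhs => rw [P.as_sum_range]
  rw [← Module.End.pow_apply, map_sum, eval_finsetSum, mul_sum]
  refine sum_congr rfl fun j _ ↦ ?_
  rw [Module.End.pow_apply, iterate_xSqMulDerivative_monomial, eval_monomial]
  ring

theorem natDegree_iterate_xSqMulDerivative_pos [IsAddTorsionFree R] {P : R[X]}
    (hP : 0 < P.natDegree) (m : ℕ) : 0 < ((xSqMulDerivative R)^[m] P).natDegree := by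
  induction m with
  | zero => exact hP
  | succ m ih =>
    have hderiv : derivative ((xSqMulDerivative R)^[m] P) ≠ 0 :=
      fun h ↦ ih.ne' (derivative_eq_zero.mp h)
    have := Nontrivial.of_polynomial_ne hderiv
    rw [Function.iterate_succ_apply', xSqMulDerivative_apply, natDegree_X_pow_mul 2 hderiv]
    omega

end CommSemiring

section Deriv

variable {𝕜 : Type*} [NontriviallyNormedField 𝕜]

theorem deriv_eval_inv_one_sub (P : 𝕜[X]) {t : 𝕜} (ht : t ≠ 1) :
    deriv (fun t ↦ P.eval (1 - t)⁻¹) t = (xSqMulDerivative 𝕜 P).eval (1 - t)⁻¹ := by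
  have hinv : HasDerivAt (fun t : 𝕜 ↦ (1 - t)⁻¹) (-(-1) / (1 - t) ^ 2) t :=
    ((hasDerivAt_id t).const_sub 1).fun_inv (sub_ne_zero.mpr ht.symm)
  refine ((P.hasDerivAt (1 - t)⁻¹).comp t hinv).deriv.trans ?_
  rw [xSqMulDerivative_apply, eval_mul, eval_pow, eval_X, inv_pow, neg_neg, one_div, mul_comm]

theorem iteratedDeriv_eval_inv_one_sub (m : ℕ) (P : 𝕜[X]) :
    Set.EqOn (iteratedDeriv m fun t ↦ P.eval (1 - t)⁻¹)
      (fun t ↦ ((xSqMulDerivative 𝕜)^[m] P).eval (1 - t)⁻¹) {1}ᶜ := by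
  induction m generalizing P with
  | zero => simp [Set.EqOn]
  | succ m ih =>
    have hderiv : Set.EqOn (deriv fun t ↦ P.eval (1 - t)⁻¹)
        (fun t ↦ (xSqMulDerivative 𝕜 P).eval (1 - t)⁻¹) {1}ᶜ :=
      fun _ ht ↦ deriv_eval_inv_one_sub P ht
    rw [iteratedDeriv_succ']
    exact (hderiv.iteratedDeriv_of_isOpen isOpen_compl_singleton m).trans (ih _)

end Deriv

end XSqMulDerivative

section ZerosOfIterates

theorem isLittleO_ascFactorial {j d : ℕ} (hjd : j < d) :
    (fun m ↦ (j.ascFactorial m : ℝ)) =o[atTop] fun m ↦ (d.ascFactorial m : ℝ) := by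
  refine Asymptotics.IsLittleO.of_bound fun c hc ↦ ?_
  filter_upwards [eventually_ge_atTop ⌈(j : ℝ) / c⌉₊, eventually_gt_atTop 0] with m hm hm_pos
  have hj : (j : ℝ) ≤ c * (j + m) := by
    rw [← div_le_iff₀' hc]
    exact (Nat.ceil_le.mp hm).trans (le_add_of_nonneg_left j.cast_nonneg)
  have hshift : (j + m : ℝ) * j.ascFactorial m ≤ j * d.ascFactorial m := by
    exact_mod_cast (Nat.succ_ascFactorial j m).symm.trans_le
      (Nat.mul_le_mul_left j (Nat.ascFactorial_le m hjd))
  rw [Real.norm_natCast, Real.norm_natCast]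
  refine le_of_mul_le_mul_left ?_ (by positivity : (0 : ℝ) < j + m)
  calc (j + m : ℝ) * j.ascFactorial m ≤ j * d.ascFactorial m := hshift
    _ ≤ c * (j + m) * d.ascFactorial m := by gcongr
    _ = (j + m) * (c * d.ascFactorial m) := by ring

theorem sum_range_succ_mul_pow_ne_zero {𝕜 : Type*} [NormedField 𝕜] {b : ℕ → 𝕜} {d : ℕ} {r : ℝ}
    (hr : 0 < r) (hb : ∑ j ∈ range d, ‖b j‖ * r ^ j < ‖b d‖ * r ^ d) {s : 𝕜} (hs : r ≤ ‖s‖) :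
    ∑ j ∈ range (d + 1), b j * s ^ j ≠ 0 := by
  intro hzero
  have hs_pos : 0 < ‖s‖ := hr.trans_le hs
  have hlead : ‖b d‖ * ‖s‖ ^ d ≤ ∑ j ∈ range d, ‖b j‖ * ‖s‖ ^ j := by
    have hneg := eq_neg_of_add_eq_zero_right ((sum_range_succ _ d).symm.trans hzero)
    calc ‖b d‖ * ‖s‖ ^ d = ‖∑ j ∈ range d, b j * s ^ j‖ := by
          rw [← norm_pow, ← norm_mul, hneg, norm_neg]
      _ ≤ ∑ j ∈ range d, ‖b j‖ * ‖s‖ ^ j := by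
          simpa only [norm_mul, norm_pow] using norm_sum_le (range d) fun j ↦ b j * s ^ j
  have hpow : ∀ j ∈ range d, ‖s‖ ^ j * r ^ d ≤ r ^ j * ‖s‖ ^ d := fun j hj ↦ by
    obtain ⟨k, rfl⟩ := Nat.exists_eq_add_of_lt (mem_range.mp hj)
    calc ‖s‖ ^ j * r ^ (j + k + 1) = r ^ j * ‖s‖ ^ j * r ^ (k + 1) := by ring
      _ ≤ r ^ j * ‖s‖ ^ j * ‖s‖ ^ (k + 1) := by gcongr
      _ = r ^ j * ‖s‖ ^ (j + k + 1) := by ring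
  refine lt_irrefl (‖b d‖ * r ^ d * ‖s‖ ^ d) ?_
  calc ‖b d‖ * r ^ d * ‖s‖ ^ d = ‖b d‖ * ‖s‖ ^ d * r ^ d := by ring
    _ ≤ (∑ j ∈ range d, ‖b j‖ * ‖s‖ ^ j) * r ^ d := by gcongr
    _ = ∑ j ∈ range d, ‖b j‖ * (‖s‖ ^ j * r ^ d) := by simp only [sum_mul, mul_assoc]
    _ ≤ ∑ j ∈ range d, ‖b j‖ * (r ^ j * ‖s‖ ^ d) := sum_le_sum fun j hj ↦
        mul_le_mul_of_nonneg_left (hpow j hj) (norm_nonneg _)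
    _ = (∑ j ∈ range d, ‖b j‖ * r ^ j) * ‖s‖ ^ d := by simp only [sum_mul, mul_assoc]
    _ < ‖b d‖ * r ^ d * ‖s‖ ^ d := by gcongr

theorem eventually_eval_iterate_xSqMulDerivative_ne_zero {𝕜 : Type*} [RCLike 𝕜] {P : 𝕜[X]}
    (hP : 0 < P.natDegree) {r : ℝ} (hr : 0 < r) :
    ∀ᶠ m in atTop, ∀ s : 𝕜, r ≤ ‖s‖ → ((xSqMulDerivative 𝕜)^[m] P).eval s ≠ 0 := by
  set d := P.natDegree
  have hlead : 0 < ‖P.coeff d‖ * r ^ d :=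
    mul_pos (norm_pos_iff.mpr (leadingCoeff_ne_zero.mpr (ne_zero_of_natDegree_gt hP)))
      (pow_pos hr d)
  have htail : (fun m ↦ ∑ j ∈ range d, ‖P.coeff j‖ * r ^ j * j.ascFactorial m)
      =o[atTop] fun m ↦ (d.ascFactorial m : ℝ) :=
    .fun_sum fun j hj ↦ (isLittleO_ascFactorial (mem_range.mp hj)).const_mul_left _
  filter_upwards [htail.def (half_pos hlead)] with m hm s hs
  have hasc : (0 : ℝ) < d.ascFactorial m := by
    exact_mod_cast (Nat.pow_pos hP).trans_le (Nat.pow_succ_le_ascFactorial d m)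
  have hs_ne : s ≠ 0 := norm_pos_iff.mp (hr.trans_le hs)
  rw [eval_iterate_xSqMulDerivative]
  refine mul_ne_zero (pow_ne_zero m hs_ne) (sum_range_succ_mul_pow_ne_zero hr ?_ hs)
  simp only [norm_mul, RCLike.norm_natCast]
  calc ∑ j ∈ range d, j.ascFactorial m * ‖P.coeff j‖ * r ^ j
      = ∑ j ∈ range d, ‖P.coeff j‖ * r ^ j * j.ascFactorial m :=
        sum_congr rfl fun _ _ ↦ by ring
    _ ≤ ‖P.coeff d‖ * r ^ d / 2 * d.ascFactorial m := by
        simpa only [Real.norm_natCast] using (le_abs_self _).trans hm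
    _ < ‖P.coeff d‖ * r ^ d * d.ascFactorial m := by gcongr; exact half_lt_self hlead
    _ = d.ascFactorial m * ‖P.coeff d‖ * r ^ d := by ring

theorem eval_derivative_ne_zero_of_convex_compl {P : ℂ[X]} (hP : 0 < P.natDegree) {U : Set ℂ}
    (hU : Convex ℝ Uᶜ) (hzero : ∀ s ∈ U, P.eval s ≠ 0) :
    ∀ s ∈ U, (derivative P).eval s ≠ 0 := by
  intro s hs hs_root
  have hderiv : derivative P ≠ 0 := fun h ↦ hP.ne' (derivative_eq_zero.mp h)
  have hroots : P.rootSet ℂ ⊆ Uᶜ := fun z hz hzU ↦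
    hzero z hzU (by simpa only [coe_aeval_eq_eval] using aeval_eq_zero_of_mem_rootSet hz)
  have hmem : s ∈ (derivative P).rootSet ℂ :=
    mem_rootSet.mpr ⟨hderiv, by rwa [coe_aeval_eq_eval]⟩
  exact convexHull_min hroots hU
    (rootSet_derivative_subset_convexHull_rootSet (natDegree_pos_iff_degree_pos.mp hP) hmem) hs

end ZerosOfIterates

theorem norm_one_sub_inv_lt_one_iff {s : ℂ} (hs : s ≠ 0) : ‖1 - s⁻¹‖ < 1 ↔ 1 / 2 < s.re := by
  rw [← one_div, one_sub_div hs, norm_div, div_lt_one (norm_pos_iff.mpr hs),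
    ← sq_lt_sq₀ (norm_nonneg _) (norm_nonneg _), Complex.sq_norm, Complex.sq_norm,
    Complex.normSq_apply, Complex.normSq_apply]
  simp only [Complex.sub_re, Complex.sub_im, Complex.one_re, Complex.one_im]
  constructor <;> intro h <;> nlinarith

theorem forall_norm_lt_one_iff_forall_half_lt_re {p : ℂ → Prop} :
    (∀ t : ℂ, ‖t‖ < 1 → p (1 - t)⁻¹) ↔ ∀ s : ℂ, 1 / 2 < s.re → p s := by
  constructor
  · intro h s hs
    have hs_ne : s ≠ 0 := by rintro rfl; norm_num at hs
    simpa using h (1 - s⁻¹) ((norm_one_sub_inv_lt_one_iff hs_ne).mpr hs)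
  · intro h t ht
    have ht_ne : 1 - t ≠ 0 := sub_ne_zero.mpr (by rintro rfl; simp at ht)
    exact h _ ((norm_one_sub_inv_lt_one_iff (inv_ne_zero ht_ne)).mp (by simpa using ht))

theorem existsUnique_forall_ge_iff_le {p : ℕ → Prop} {a : ℕ}
    (hsucc : ∀ m, a ≤ m → p m → p (m + 1)) (hex : ∃ m, a ≤ m ∧ p m) :
    ∃! m₀, a ≤ m₀ ∧ ∀ m, a ≤ m → (p m ↔ m₀ ≤ m) := by
  classical
  obtain ⟨hle, hspec⟩ := Nat.find_spec hex
  have hp : ∀ m, Nat.find hex ≤ m → p m := fun m hm ↦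
    Nat.le_induction hspec (fun k hk ↦ hsucc k (hle.trans hk)) m hm
  refine ⟨Nat.find hex, ⟨hle, fun m hm ↦ ⟨fun h ↦ Nat.find_min' hex ⟨hm, h⟩, hp m⟩⟩, ?_⟩
  rintro m₀ ⟨hm₀, hiff⟩
  exact le_antisymm ((hiff _ hle).mp hspec) (Nat.find_min' hex ⟨hm₀, (hiff m₀ hm₀).mpr le_rfl⟩)

theorem existsUnique_forall_iteratedDeriv_ne_zero_iff_le {f : ℂ → ℂ} {P : ℂ[X]}
    (hP : 0 < P.natDegree)
    (hf : Set.EqOn f (fun t ↦ P.eval (1 - t)⁻¹) (Metric.ball 0 1)) (a : ℕ) :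
    ∃! m₀ : ℕ, a ≤ m₀ ∧ ∀ m : ℕ, a ≤ m →
      ((∀ t : ℂ, ‖t‖ < 1 → iteratedDeriv m f t ≠ 0) ↔ m₀ ≤ m) := by
  have hiter (m : ℕ) (t : ℂ) (ht : ‖t‖ < 1) :
      iteratedDeriv m f t = ((xSqMulDerivative ℂ)^[m] P).eval (1 - t)⁻¹ :=
    (hf.iteratedDeriv_of_isOpen Metric.isOpen_ball m (mem_ball_zero_iff.mpr ht)).trans
      (iteratedDeriv_eval_inv_one_sub m P (by rintro rfl; simp at ht))
  have hhalfPlane (m : ℕ) : (∀ t : ℂ, ‖t‖ < 1 → iteratedDeriv m f t ≠ 0) ↔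
      ∀ s : ℂ, 1 / 2 < s.re → ((xSqMulDerivative ℂ)^[m] P).eval s ≠ 0 := by
    rw [← forall_norm_lt_one_iff_forall_half_lt_re]
    exact forall₂_congr fun t ht ↦ by rw [hiter m t ht]
  simp only [hhalfPlane]
  have hconvex : Convex ℝ {s : ℂ | 1 / 2 < s.re}ᶜ := by
    simpa only [Set.compl_ofPred, not_lt] using convex_halfSpace_re_le (1 / 2)
  refine existsUnique_forall_ge_iff_le (fun m _ hm s hs ↦ ?_) ?_
  · have hs_ne : s ≠ 0 := by rintro rfl; norm_num at hs
    rw [Function.iterate_succ_apply', xSqMulDerivative_apply, eval_mul, eval_pow, eval_X]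
    exact mul_ne_zero (pow_ne_zero 2 hs_ne) (eval_derivative_ne_zero_of_convex_compl
      (natDegree_iterate_xSqMulDerivative_pos hP m) hconvex hm s hs)
  · obtain ⟨m, ham, hm⟩ := ((eventually_ge_atTop a).and
      (eventually_eval_iterate_xSqMulDerivative_ne_zero hP (one_half_pos (α := ℝ)))).exists
    exact ⟨m, ham, fun s hs ↦ hm s (hs.le.trans (Complex.re_le_norm s))⟩

section Polylogarithm

theorem fbhLi_zero {t : ℂ} (ht : ‖t‖ < 1) : fbhLi 0 t = (1 - t)⁻¹ := by
  simpa only [fbhLi, pow_zero, one_mul] using tsum_geometric_of_norm_lt_one ht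

theorem fbhLi_succ (n : ℕ) {t : ℂ} (ht : ‖t‖ < 1) : fbhLi (n + 1) t = t * deriv (fbhLi n) t := by
  obtain ⟨r, htr, hr⟩ := exists_between ht
  have hr_norm : ‖r‖ < 1 := by rwa [Real.norm_of_nonneg ((norm_nonneg t).trans htr.le)]
  have hbound (k : ℕ) (w : ℂ) (hw : w ∈ Metric.ball (0 : ℂ) r) :
      ‖(k : ℂ) ^ n * w ^ k‖ ≤ (k : ℝ) ^ n * r ^ k := by
    rw [norm_mul, norm_pow, norm_pow, Complex.norm_natCast]
    gcongr
    exact (mem_ball_zero_iff.mp hw).le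
  have hderiv : HasSum (fun k : ℕ ↦ deriv (fun w : ℂ ↦ (k : ℂ) ^ n * w ^ k) t)
      (deriv (fbhLi n) t) :=
    Complex.hasSum_deriv_of_summable_norm (summable_pow_mul_geometric_of_norm_lt_one n hr_norm)
      (fun k ↦ by fun_prop) Metric.isOpen_ball hbound (mem_ball_zero_iff.mpr htr)
  rw [← (hderiv.mul_left t).tsum_eq]
  refine tsum_congr fun k ↦ ?_
  rw [deriv_const_mul_field, deriv_pow_field]
  rcases k with _ | k
  · simp
  · rw [Nat.add_sub_cancel]
    ring

/-- The polynomial `P` with `Li_{-n}(t) = P((1 - t)⁻¹)`. The recursion expresses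
`Li_{-(n + 1)} = t * d/dt Li_{-n}` in the coordinate `X = (1 - t)⁻¹`, where
`t * d/dt = (X ^ 2 - X) * d/dX`. -/
def polylogPolynomial : ℕ → ℂ[X]
  | 0 => X
  | n + 1 => (X ^ 2 - X) * derivative (polylogPolynomial n)

theorem natDegree_polylogPolynomial (n : ℕ) : (polylogPolynomial n).natDegree = n + 1 := by
  induction n with
  | zero => exact natDegree_X
  | succ n ih =>
    have hderiv : derivative (polylogPolynomial n) ≠ 0 := fun h ↦
      n.succ_ne_zero (ih.symm.trans (derivative_eq_zero.mp h))
    have hquad : (X ^ 2 - X : ℂ[X]).natDegree = 2 := by compute_degree!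
    have hquad_ne : (X ^ 2 - X : ℂ[X]) ≠ 0 := ne_zero_of_natDegree_gt (hquad ▸ two_pos)
    rw [polylogPolynomial, natDegree_mul hquad_ne hderiv, hquad, natDegree_derivative, ih]
    omega

theorem fbhLi_eqOn_eval_polylogPolynomial (n : ℕ) :
    Set.EqOn (fbhLi n) (fun t ↦ (polylogPolynomial n).eval (1 - t)⁻¹) (Metric.ball 0 1) := by
  induction n with
  | zero => exact fun t ht ↦ by simpa [polylogPolynomial] using fbhLi_zero (mem_ball_zero_iff.mp ht)
  | succ n ih =>
    intro t ht
    have ht_norm : ‖t‖ < 1 := mem_ball_zero_iff.mp ht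
    have ht_ne : t ≠ 1 := by rintro rfl; simp at ht_norm
    have hcoord : t * (1 - t)⁻¹ ^ 2 = (1 - t)⁻¹ ^ 2 - (1 - t)⁻¹ := by
      have hsub_ne : 1 - t ≠ 0 := sub_ne_zero.mpr ht_ne.symm
      field_simp
      ring
    rw [fbhLi_succ n ht_norm, ih.deriv Metric.isOpen_ball ht, deriv_eval_inv_one_sub _ ht_ne,
      xSqMulDerivative_apply]
    simp only [polylogPolynomial, eval_mul, eval_pow, eval_sub, eval_X]
    rw [← hcoord, mul_assoc]

end Polylogarithm

/-- For every fixed `n ≥ 1`, there is a unique positive integer `m₀` such that for every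
`m ≥ 1`, the `m`-th derivative of `Li_{−n}` has no zeros in the open unit disk if and
only if `m ≥ m₀`.  (This characterizes when the Fock–Bargmann–Hartogs domain `D_{n,m}`
is a Lu Qi-Keng domain.) -/
theorem statement17 (n : ℕ) (hn : 1 ≤ n) :
    ∃! m₀ : ℕ, 1 ≤ m₀ ∧ ∀ m : ℕ, 1 ≤ m →
      ((∀ t : ℂ, ‖t‖ < 1 → iteratedDeriv m (fbhLi n) t ≠ 0) ↔ m₀ ≤ m) := by
  have hdeg : 0 < (polylogPolynomial n).natDegree := by
    rw [natDegree_polylogPolynomial]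
    exact n.succ_pos
  exact existsUnique_forall_iteratedDeriv_ne_zero_iff_le hdeg
    (fbhLi_eqOn_eval_polylogPolynomial n) 1
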